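/- Let τ = {nop, set, swap, free}. If the cubic monotone 3-CNF φ has a one-in-three model, then for every state s of the union U^{σ1}_φ at which the event k does not occur, k is τ-inhibitable at s, i.e., there is a τ-region (sup, sig) of U^{σ1}_φ with sig(k) undefined at sup(s). -/

import Mathlib

/-!
Every region used here signs `k` by `free`, so all ends of `k`-edges are unsupported and `k` is
inhibited exactly at the supported states. It therefore suffices to give finitely many
kinds of such regions whose supports together contain every state at which `k` does not occur.

* `fresh_region`: the initial state of one gadget is the only supported state, and its fresh
  event is signed `swap`.
* `model_region`: given a one-in-three model `M`, the event `m` and the events of `V` are signed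
  `swap`, those of `Acc` and `W` are signed `nop`, the variables in `M` are signed `set` and the
  others `nop`. In `T_{i,0}` the support has to drop from `1` (behind `v_{4i}`) to `0` (in front
  of `w_i`), and this happens at the one-directional edge of the unique variable of the clause
  lying in `M`. Uniqueness makes `T_{i,1}`, `T_{i,2}`, `T_{i,3}` consistent. This region covers
  `h_{j,2}`, `f_{0,2}`, `f_{0,5}`, `t_{i,0,2}` and `d_{ℓ,2}`.
* `set_region`: with `z` and all variables signed `set` and `m`, `V` signed `nop`, the events of
  `Acc` and `W` may be signed `swap`. Two choices of the swapped events cover the remaining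
  states.
-/

namespace PetriNets

/-- The eight boolean interactions. -/
inductive Interaction : Type
  | nop | inp | out | set | res | swap | used | free
  deriving DecidableEq

/-- The partial function on `{0,1}` (encoded as `Bool`) denoted by an interaction. -/
def Interaction.apply : Interaction → Bool → Option Bool
  | .nop, x => some x
  | .inp, x => if x then some false else none
  | .out, x => if x then none else some true
  | .set, _ => some true
  | .res, _ => some false
  | .swap, x => some (!x)
  | .used, x => if x then some true else none
  | .free, x => if x then none else some false

/-- A transition system with states `S`, events `E`, a partial transition
function and an initial state. -/
structure TS (S E : Type) where
  delta : S → E → Option S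
  init : S

/-- A `τ`-region of a transition system. -/
structure Region (τ : Set Interaction) {S E : Type} (A : TS S E) where
  sup : S → Bool
  sig : E → Interaction
  sig_mem : ∀ e : E, sig e ∈ τ
  consistent : ∀ (s : S) (e : E) (s' : S), A.delta s e = some s' →
    (sig e).apply (sup s) = some (sup s')

/-- The state separation property. -/
def SSP (τ : Set Interaction) {S E : Type} (A : TS S E) : Prop :=
  ∀ s s' : S, s ≠ s' → ∃ R : Region τ A, R.sup s ≠ R.sup s'

/-- The event state separation property. -/
def ESSP (τ : Set Interaction) {S E : Type} (A : TS S E) : Prop :=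
  ∀ (s : S) (e : E), A.delta s e = none →
    ∃ R : Region τ A, (R.sig e).apply (R.sup s) = none

/-- `τ`-feasibility: both the `τ`-SSP and the `τ`-ESSP. -/
def Feasible (τ : Set Interaction) {S E : Type} (A : TS S E) : Prop :=
  SSP τ A ∧ ESSP τ A

/-- A union of transition systems with pairwise disjoint states (disjointness is
enforced by the sigma type of states) over a common event alphabet. -/
def Union (ι : Type) (S : ι → Type) (E : Type) : Type := (i : ι) → TS (S i) E

/-- A `τ`-region of a union: its restriction to every component is a region. -/
structure URegion (τ : Set Interaction) {ι : Type} {S : ι → Type} {E : Type}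
    (U : Union ι S E) where
  sup : (Σ i : ι, S i) → Bool
  sig : E → Interaction
  sig_mem : ∀ e : E, sig e ∈ τ
  consistent : ∀ (i : ι) (s : S i) (e : E) (s' : S i), (U i).delta s e = some s' →
    (sig e).apply (sup ⟨i, s⟩) = some (sup ⟨i, s'⟩)

/-- SSP for unions: distinct states of a common component are separable. -/
def USSP (τ : Set Interaction) {ι : Type} {S : ι → Type} {E : Type}
    (U : Union ι S E) : Prop :=
  ∀ (i : ι) (s s' : S i), s ≠ s' → ∃ R : URegion τ U, R.sup ⟨i, s⟩ ≠ R.sup ⟨i, s'⟩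

/-- ESSP for unions: every event is inhibitable at every state where it does not occur. -/
def UESSP (τ : Set Interaction) {ι : Type} {S : ι → Type} {E : Type}
    (U : Union ι S E) : Prop :=
  ∀ (e : E) (i : ι) (s : S i), (U i).delta s e = none →
    ∃ R : URegion τ U, (R.sig e).apply (R.sup ⟨i, s⟩) = none

/-- The type of nets `{nop, set, swap, free}`, i.e. the single member of `σ1`. -/
def tau1 : Set Interaction :=
  {Interaction.nop, Interaction.set, Interaction.swap, Interaction.free}

/-- Membership in `σ2 = { {nop, set, swap, used} ∪ ω : ω ⊆ {res, free} }`. -/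
def sigma2mem (τ : Set Interaction) : Prop :=
  ∃ ω : Set Interaction, ω ⊆ {Interaction.res, Interaction.free} ∧
    τ = ({Interaction.nop, Interaction.set, Interaction.swap, Interaction.used} :
      Set Interaction) ∪ ω

/-- Direction of an edge of a chain-shaped transition system. -/
inductive Dir : Type
  | fwd | bwd | both
  deriving DecidableEq

def Dir.allowsFwd : Dir → Bool
  | .fwd => true
  | .both => true
  | .bwd => false

def Dir.allowsBwd : Dir → Bool
  | .bwd => true
  | .both => true
  | .fwd => false

def echk {E : Type} [DecidableEq E] (o : Option (E × Dir)) (e : E) (fwd : Bool) : Bool :=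
  match o with
  | none => false
  | some (e', d) => decide (e' = e) && (if fwd then d.allowsFwd else d.allowsBwd)

/-- Transition function of a chain with edge specification `spec`:
`spec[t] = (e, d)` means an edge between states `t` and `t + 1` labelled `e`
with direction `d` (forward, backward or both). -/
def chainDelta {E : Type} [DecidableEq E] (spec : List (E × Dir)) (s : ℕ) (e : E) :
    Option ℕ :=
  if echk spec[s]? e true = true then some (s + 1)
  else if s ≠ 0 ∧ echk spec[s - 1]? e false = true then some (s - 1)
  else none

/-- A chain-shaped transition system with `n + 1` states whose initial state is
the last state of the chain. -/
def chainTS {E : Type} [DecidableEq E] (n : ℕ) (spec : List (E × Dir)) :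
    TS (Fin (n + 1)) E where
  init := Fin.last n
  delta := fun s e => (chainDelta spec s.val e).bind fun r =>
    if h : r < n + 1 then some ⟨r, h⟩ else none

/-- Index set of the gadget transition systems of `U^σ_φ`. -/
inductive GIdx (m : ℕ) : Type
  | H : Fin (4 * m) → GIdx m
  | F0 : GIdx m
  | F1 : GIdx m
  | F2 : GIdx m
  | G : Fin m → GIdx m
  | D : Fin (3 * m) → GIdx m
  | T0 : Fin m → GIdx m
  | T1 : Fin m → GIdx m
  | T2 : Fin m → GIdx m
  | T3 : Fin m → GIdx m
  deriving DecidableEq, Fintype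

/-- Events of the gadgets of `U^σ_φ`; `u g` is the unique fresh event of gadget `g`
and `x vv` is the event of the variable `vv` of `φ`. -/
inductive GEvent (V : Type) (m : ℕ) : Type
  | k : GEvent V m
  | mev : GEvent V m
  | z : GEvent V m
  | q : Fin 4 → GEvent V m
  | v : Fin (4 * m) → GEvent V m
  | w : Fin m → GEvent V m
  | y : Fin m → GEvent V m
  | p : Fin (3 * m) → GEvent V m
  | a : Fin (3 * m) → GEvent V m
  | x : V → GEvent V m
  | u : GIdx m → GEvent V m
  deriving DecidableEq

/-- State spaces of the gadget transition systems. -/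
def GS (m : ℕ) : GIdx m → Type
  | .H _ => Fin 6
  | .F0 => Fin 9
  | .F1 => Fin 6
  | .F2 => Fin 10
  | .G _ => Fin 9
  | .D _ => Fin 9
  | .T0 _ => Fin 18
  | .T1 _ => Fin 5
  | .T2 _ => Fin 5
  | .T3 _ => Fin 5

def fmul4 {m : ℕ} (i : Fin m) (o : Fin 4) : Fin (4 * m) :=
  ⟨4 * i.val + o.val, by have h1 := i.isLt; have h2 := o.isLt; omega⟩

def fmul3 {m : ℕ} (i : Fin m) (o : Fin 3) : Fin (3 * m) :=
  ⟨3 * i.val + o.val, by have h1 := i.isLt; have h2 := o.isLt; omega⟩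

/-- The union `U^σ_φ` for a cubic monotone 3-CNF `φ` given by its clauses
`X : Fin m → Fin 3 → V`.  For `b = false` this is `U^{σ1}_φ`, for `b = true`
it is `U^{σ2}_φ` (in which the events `v_{4i}` and `w_i` of `T_{i,0}` are exchanged). -/
def gadget {V : Type} [DecidableEq V] (m : ℕ) (X : Fin m → Fin 3 → V) (b : Bool) :
    Union (GIdx m) (GS m) (GEvent V m) := fun idx =>
  match idx with
  | .H j => chainTS 5
      [(.k, .both), (.mev, .both), (.v j, .both), (.k, .both), (.u (.H j), .both)]
  | .F0 => chainTS 8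
      [(.k, .both), (.mev, .both), (.q 0, .both), (.k, .both), (.mev, .both),
       (.q 1, .both), (.k, .both), (.u .F0, .both)]
  | .F1 => chainTS 5
      [(.k, .both), (.q 2, .both), (.q 3, .both), (.k, .both), (.u .F1, .both)]
  | .F2 => chainTS 9
      [(.k, .both), (.q 2, .both), (.q 0, .both), (.z, .both), (.q 1, .both),
       (.z, .both), (.q 3, .both), (.k, .both), (.u .F2, .both)]
  | .G j => chainTS 8
      [(.k, .both), (.y j, .both), (.z, .fwd), (.z, .both), (.y j, .both),
       (.w j, .both), (.k, .both), (.u (.G j), .both)]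
  | .D l => chainTS 8
      [(.k, .both), (.p l, .both), (.z, .fwd), (.z, .both), (.p l, .both),
       (.a l, .both), (.k, .both), (.u (.D l), .both)]
  | .T0 i => chainTS 17
      [(.k, .both),
       ((if b then .w i else .v (fmul4 i 0)), .both),
       (.a (fmul3 i 0), .both),
       (.x (X i 0), .both),
       (.x (X i 0), .bwd),
       (.a (fmul3 i 0), .both),
       (.a (fmul3 i 1), .both),
       (.x (X i 1), .both),
       (.x (X i 1), .bwd),
       (.a (fmul3 i 1), .both),
       (.a (fmul3 i 2), .both),
       (.x (X i 2), .both),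
       (.x (X i 2), .bwd),
       (.a (fmul3 i 2), .both),
       ((if b then .v (fmul4 i 0) else .w i), .both),
       (.k, .both),
       (.u (.T0 i), .both)]
  | .T1 i => chainTS 4
      [(.x (X i 0), .both), (.v (fmul4 i 1), .both), (.x (X i 1), .both),
       (.u (.T1 i), .both)]
  | .T2 i => chainTS 4
      [(.x (X i 0), .both), (.v (fmul4 i 2), .both), (.x (X i 2), .both),
       (.u (.T2 i), .both)]
  | .T3 i => chainTS 4
      [(.x (X i 1), .both), (.v (fmul4 i 3), .both), (.x (X i 2), .both),
       (.u (.T3 i), .both)]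

/-- `φ` is a cubic monotone 3-CNF: the three variables of every clause are
pairwise distinct, and every variable occurs in exactly three clauses. -/
def Cubic {V : Type} [Fintype V] [DecidableEq V] (m : ℕ) (X : Fin m → Fin 3 → V) : Prop :=
  (∀ i : Fin m, Function.Injective (X i)) ∧
  ∀ vv : V, (Finset.univ.filter (fun pr : Fin m × Fin 3 => X pr.1 pr.2 = vv)).card = 3

/-- `M` is a one-in-three model of `φ`: it contains exactly one variable of
every clause. -/
def OneInThree {V : Type} (m : ℕ) (X : Fin m → Fin 3 → V) (M : Set V) : Prop :=
  ∀ i : Fin m, ∃! r : Fin 3, X i r ∈ M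

def hidx {m : ℕ} (hm : 0 < m) : Fin (4 * m) := ⟨0, by omega⟩

/-- The state `h_{0,2}` of the gadget `H_0`. -/
def h02 {m : ℕ} (hm : 0 < m) : Σ i : GIdx m, GS m i := ⟨GIdx.H (hidx hm), (2 : Fin 6)⟩

/-! ### Regions of chains -/

/-- Consistency of a support `f` (indexed by position) with a signature along a chain,
edge by edge; `f` is shifted when passing to the tail of the edge list. -/
def ChainOK {E : Type} (sig : E → Interaction) : (ℕ → Bool) → List (E × Dir) → Prop
  | _, [] => True
  | f, (e, d) :: l =>
      (d.allowsFwd = true → (sig e).apply (f 0) = some (f 1)) ∧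
      (d.allowsBwd = true → (sig e).apply (f 1) = some (f 0)) ∧
      ChainOK sig (fun t => f (t + 1)) l

lemma ChainOK.edge {E : Type} {sig : E → Interaction} {l : List (E × Dir)} :
    ∀ {f : ℕ → Bool}, ChainOK sig f l → ∀ {t : ℕ} {e : E} {d : Dir}, l[t]? = some (e, d) →
      (d.allowsFwd = true → (sig e).apply (f t) = some (f (t + 1))) ∧
      (d.allowsBwd = true → (sig e).apply (f (t + 1)) = some (f t)) := by
  induction l with
  | nil => intro f _ t e d h; simp at h
  | cons hd tl ih =>
    intro f hok t e d h
    obtain ⟨e', d'⟩ := hd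
    obtain ⟨h1, h2, h3⟩ := hok
    cases t with
    | zero =>
      simp only [List.getElem?_cons_zero, Option.some.injEq, Prod.mk.injEq] at h
      obtain ⟨rfl, rfl⟩ := h
      exact ⟨h1, h2⟩
    | succ t =>
      rw [List.getElem?_cons_succ] at h
      exact ih h3 h

lemma echk_eq_true {E : Type} [DecidableEq E] {o : Option (E × Dir)} {e : E} {b : Bool}
    (h : echk o e b = true) :
    ∃ d, o = some (e, d) ∧ (if b then d.allowsFwd else d.allowsBwd) = true := by
  rcases o with _ | ⟨e', d⟩
  · simp [echk] at h
  · simp only [echk, Bool.and_eq_true, decide_eq_true_eq] at h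
    obtain ⟨rfl, h⟩ := h
    exact ⟨d, rfl, h⟩

lemma chainTS_consistent {E : Type} [DecidableEq E] {sig : E → Interaction} {f : ℕ → Bool}
    {n : ℕ} {spec : List (E × Dir)} (hok : ChainOK sig f spec)
    (s : Fin (n + 1)) (e : E) (s' : Fin (n + 1)) (h : (chainTS n spec).delta s e = some s') :
    (sig e).apply (f s.val) = some (f s'.val) := by
  simp only [chainTS, Option.bind_eq_some_iff] at h
  obtain ⟨r, hr, h⟩ := h
  split_ifs at h with hlt
  simp only [Option.some.injEq] at h
  subst h
  simp only [chainDelta] at hr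
  split_ifs at hr with h1 h2
  · obtain ⟨d, hd, hf⟩ := echk_eq_true h1
    cases hr
    exact (hok.edge hd).1 (by simpa using hf)
  · obtain ⟨d, hd, hf⟩ := echk_eq_true h2.2
    cases hr
    have h3 := (hok.edge hd).2 (by simpa using hf)
    rwa [Nat.sub_add_cancel (Nat.one_le_iff_ne_zero.mpr h2.1)] at h3

/-- The position of a state in its chain. -/
def pos {m : ℕ} : (i : GIdx m) → GS m i → ℕ
  | .H _, s => Fin.val (n := 6) s
  | .F0, s => Fin.val (n := 9) s
  | .F1, s => Fin.val (n := 6) s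
  | .F2, s => Fin.val (n := 10) s
  | .G _, s => Fin.val (n := 9) s
  | .D _, s => Fin.val (n := 9) s
  | .T0 _, s => Fin.val (n := 18) s
  | .T1 _, s => Fin.val (n := 5) s
  | .T2 _, s => Fin.val (n := 5) s
  | .T3 _, s => Fin.val (n := 5) s

/-- `f` and `sig` describe a region of `U^{σ1}_φ` in which `k` is signed `free`, so that `k`
is inhibited at every state supported by `f`. -/
structure FreeRegion {V : Type} [DecidableEq V] (m : ℕ) (X : Fin m → Fin 3 → V)
    (f : GIdx m → ℕ → Bool) (sig : GEvent V m → Interaction) : Prop where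
  mem : ∀ e, sig e ∈ tau1
  cons : ∀ (i : GIdx m) (s : GS m i) (e : GEvent V m) (s' : GS m i),
    (gadget m X false i).delta s e = some s' →
      (sig e).apply (f i (pos i s)) = some (f i (pos i s'))
  k_free : sig .k = .free

lemma FreeRegion.inhibits {V : Type} [DecidableEq V] {m : ℕ} {X : Fin m → Fin 3 → V}
    {f : GIdx m → ℕ → Bool} {sig : GEvent V m → Interaction} (h : FreeRegion m X f sig)
    {i : GIdx m} {s : GS m i} (hs : f i (pos i s) = true) :
    ∃ R : URegion tau1 (gadget m X false), (R.sig GEvent.k).apply (R.sup ⟨i, s⟩) = none := by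
  refine ⟨⟨fun st => f st.1 (pos st.1 st.2), sig, h.mem, h.cons⟩, ?_⟩
  simp [h.k_free, hs, Interaction.apply]

/-! ### The region of a fresh event -/

/-- Only the initial state of `g`, the far end of the edge of its fresh event, is supported. -/
def freshSup {m : ℕ} (g : GIdx m) (i : GIdx m) (t : ℕ) : Bool :=
  decide (i = g) && decide (t = match g with
    | .H _ | .F1 => 5
    | .F0 | .G _ | .D _ => 8
    | .F2 => 9
    | .T0 _ => 17
    | .T1 _ | .T2 _ | .T3 _ => 4)

/-- The signature belonging to `freshSup`. -/
def freshSig {V : Type} {m : ℕ} (g : GIdx m) : GEvent V m → Interaction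
  | .k => .free
  | .u i => if i = g then .swap else .nop
  | _ => .nop

lemma fresh_region {V : Type} [DecidableEq V] (m : ℕ) (X : Fin m → Fin 3 → V) (g : GIdx m) :
    FreeRegion m X (freshSup g) (freshSig g) where
  mem e := by
    cases e <;> simp only [freshSig, tau1] <;> (try split_ifs) <;> simp
  cons i := by
    cases i <;> refine chainTS_consistent ?_ <;>
    · simp only [ChainOK, freshSup, freshSig, Interaction.apply, Dir.allowsFwd, Dir.allowsBwd]
      cases g <;> simp <;> split_ifs <;> simp_all
  k_free := rfl

/-! ### The region of a one-in-three model -/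

open Classical in
/-- The support induced by a model `M`; `r i` is the position in clause `i` of its variable
in `M`, and the chain `T_{i,0}` is supported from state `2` until the event `X_{i, r i}` is
passed. -/
noncomputable def modelSup {V : Type} {m : ℕ} (X : Fin m → Fin 3 → V) (M : Set V)
    (r : Fin m → Fin 3) (i : GIdx m) (t : ℕ) : Bool :=
  match i with
  | .H _ => decide (t = 2)
  | .F0 => decide (t = 2 ∨ t = 5)
  | .F1 => false
  | .F2 => decide (t = 3 ∨ t = 4)
  | .G _ | .D _ => decide (2 ≤ t ∧ t ≤ 4)
  | .T0 i => decide (2 ≤ t ∧ t ≤ 4 * (r i).val + 4)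
  | .T1 i | .T2 i => decide ((t ≤ 1 ∧ X i 0 ∈ M) ∨ (2 ≤ t ∧ t ≤ 4 ∧ X i 0 ∉ M))
  | .T3 i => decide ((t ≤ 1 ∧ X i 1 ∈ M) ∨ (2 ≤ t ∧ t ≤ 4 ∧ X i 1 ∉ M))

open Classical in
/-- The signature belonging to `modelSup`: the variables in `M` are signed `set`. -/
noncomputable def modelSig {V : Type} {m : ℕ} (M : Set V) : GEvent V m → Interaction
  | .k => .free
  | .mev => .swap
  | .z => .nop
  | .q o => if o.val ≤ 1 then .swap else .nop
  | .v _ => .swap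
  | .w _ => .nop
  | .y _ => .swap
  | .p _ => .swap
  | .a _ => .nop
  | .x vv => if vv ∈ M then .set else .nop
  | .u _ => .nop

lemma model_region {V : Type} [DecidableEq V] (m : ℕ) (X : Fin m → Fin 3 → V) (M : Set V)
    (r : Fin m → Fin 3) (hr : ∀ i j, X i j ∈ M ↔ j = r i) :
    FreeRegion m X (modelSup X M r) (modelSig M) where
  mem e := by
    cases e <;> simp only [modelSig, tau1] <;> (try split_ifs) <;> simp
  cons i := by
    cases i with
    | T0 i | T1 i | T2 i | T3 i =>
      refine chainTS_consistent ?_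
      have h0 := hr i 0
      have h1 := hr i 1
      have h2 := hr i 2
      generalize hri : r i = ρ at h0 h1 h2
      fin_cases ρ <;>
      simp [ChainOK, modelSup, modelSig, Interaction.apply, Dir.allowsFwd, Dir.allowsBwd,
        hri] at h0 h1 h2 ⊢ <;> simp [h0, h1, h2]
    | _ =>
      refine chainTS_consistent ?_
      simp [ChainOK, modelSup, modelSig, Interaction.apply, Dir.allowsFwd, Dir.allowsBwd]
  k_free := rfl

/-! ### Two regions with all variables signed `set` -/

/-- The support of a region that signs `z` and all variables by `set`. If `c` holds then every
event of `Acc` is signed `swap` and `W` is not; otherwise `W` and the events `a_{3i}`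
are signed `swap`. -/
def setSup {m : ℕ} (c : Bool) (i : GIdx m) (t : ℕ) : Bool :=
  match i with
  | .H _ | .F0 => false
  | .F1 => decide (t = 2)
  | .F2 => decide (2 ≤ t ∧ t ≤ 6)
  | .G _ => decide (t = 3 ∨ t = 4) || (c && decide (t = 2)) || (!c && decide (t = 5))
  | .D l =>
      let swapped := c || decide (l.val % 3 = 0)
      decide (t = 3 ∨ t = 4) || (!swapped && decide (t = 2)) || (swapped && decide (t = 5))
  | .T0 _ =>
      if c then decide (3 ≤ t ∧ t ≤ 13 ∧ t ≠ 6 ∧ t ≠ 10)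
      else decide (3 ≤ t ∧ t ≤ 14 ∧ t ≠ 5)
  | .T1 _ | .T2 _ | .T3 _ => true

/-- The signature belonging to `setSup`. -/
def setSig {V : Type} {m : ℕ} (c : Bool) : GEvent V m → Interaction
  | .k => .free
  | .mev => .nop
  | .z => .set
  | .q o => if o.val ≤ 1 then .nop else .swap
  | .v _ => .nop
  | .w _ => if c then .nop else .swap
  | .y _ => if c then .swap else .nop
  | .p l => if c || decide (l.val % 3 = 0) then .nop else .swap
  | .a l => if c || decide (l.val % 3 = 0) then .swap else .nop
  | .x _ => .set
  | .u i => match i with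
    | .T1 _ | .T2 _ | .T3 _ => .set
    | _ => .nop

lemma set_region {V : Type} [DecidableEq V] (m : ℕ) (X : Fin m → Fin 3 → V) (c : Bool) :
    FreeRegion m X (setSup c) (setSig c) where
  mem e := by
    cases e <;> simp only [setSig, tau1] <;> (repeat' split) <;> simp
  cons i := by
    cases i with
    | D l =>
      refine chainTS_consistent ?_
      by_cases hl : l.val % 3 = 0 <;> cases c <;>
      simp [ChainOK, setSup, setSig, Interaction.apply, Dir.allowsFwd, Dir.allowsBwd, hl]
    | _ =>
      refine chainTS_consistent ?_
      cases c <;>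
      simp [ChainOK, setSup, setSig, Interaction.apply, Dir.allowsFwd, Dir.allowsBwd, fmul3,
        Nat.add_mod]
  k_free := rfl

/-- If `φ` has a one-in-three model, then for
`τ = {nop, set, swap, free}` the event `k` is `τ`-inhibitable at every state of
`U^{σ1}_φ` at which `k` does not occur. -/
theorem sigma1_model_inhibits_k {V : Type} [Fintype V] [DecidableEq V]
    (m : ℕ) (hm : 0 < m) (X : Fin m → Fin 3 → V) (hφ : Cubic m X)
    (hM : ∃ M : Set V, OneInThree m X M) :
    ∀ (i : GIdx m) (s : GS m i), (gadget m X false i).delta s GEvent.k = none →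
      ∃ R : URegion tau1 (gadget m X false),
        (R.sig GEvent.k).apply (R.sup ⟨i, s⟩) = none := by
  classical
  obtain ⟨M, hM⟩ := hM
  choose r hr hr' using hM
  have hMr : ∀ i j, X i j ∈ M ↔ j = r i :=
    fun i j => ⟨hr' i j, fun h => h ▸ hr i⟩
  intro i s h
  -- One of the four supports contains every state that is not incident to `k`.
  have key : freshSup i i (pos i s) = true ∨ modelSup X M r i (pos i s) = true ∨
      setSup true i (pos i s) = true ∨ setSup false i (pos i s) = true := by
    cases i <;> simp only [GS] at s <;> fin_cases s <;>
    first
    | (simp [freshSup, modelSup, setSup, pos]; done)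
    | exact (Option.some_ne_none _ h).elim
  rcases key with h | h | h | h
  · exact (fresh_region m X i).inhibits h
  · exact (model_region m X M r hMr).inhibits h
  · exact (set_region m X true).inhibits h
  · exact (set_region m X false).inhibits h

end PetriNets
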